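/- arXiv:1801.04409 — 5 statements merged into one kernel-verified Lean document; each statement's English description precedes it below -/
import Mathlib

section
/- Let k be an algebraically closed field, A a k-algebra, and let V and W be indecomposable A-modules that are finite-dimensional as k-vector spaces. Let f : V → W be an A-module homomorphism. Then the following are equivalent: (a) for every A-module homomorphism g : W → V the k-linear trace of f ∘ g (an endomorphism of W) is zero; (b) either f is not bijective, or the image of the k-dimension of V in k is zero (i.e., (finrank_k V : k) = 0). -/
/-- An `A`-module `V` is indecomposable if it is nonzero and its only idempotent
`A`-module endomorphisms are `0` and the identity. -/
def Module.Indecomposable (A V : Type*) [Ring A] [AddCommGroup V] [Module A V] : Prop :=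
  Nontrivial V ∧ ∀ e : V →ₗ[A] V, e ∘ₗ e = e → e = 0 ∨ e = LinearMap.id

/-!
By Fitting's lemma, an endomorphism of an indecomposable module of finite length is nilpotent or
invertible. If `f` is not bijective then no `f ∘ g` is, since otherwise `f` would split off `W` as a
direct summand of `V`; hence `f ∘ g` is nilpotent and has trace zero. If `f` is bijective, `g = f⁻¹`
gives trace `dim W = dim V`, while in general an endomorphism of `W` is a scalar plus a nilpotent,
so that its trace is a multiple of `dim W`.
-/

theorem trace_restrictScalars_eq_zero_of_isNilpotent {R A M : Type*} [CommRing R] [IsReduced R]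
    [Semiring A] [AddCommGroup M] [Module R M] [Module A M] [LinearMap.CompatibleSMul M M R A]
    {h : Module.End A M} (hh : IsNilpotent h) :
    LinearMap.trace R M (LinearMap.restrictScalars R h) = 0 := by
  obtain ⟨n, hn⟩ := hh
  have hnil : IsNilpotent (LinearMap.restrictScalars R h : Module.End R M) := by
    refine ⟨n, LinearMap.ext fun x => ?_⟩
    rw [Module.End.pow_apply, LinearMap.coe_restrictScalars, ← Module.End.pow_apply, hn]
    rfl
  exact (LinearMap.isNilpotent_trace_of_isNilpotent hnil).eq_zero

namespace Module.Indecomposable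

section Ring

variable {A V W : Type*} [Ring A] [AddCommGroup V] [AddCommGroup W] [Module A V] [Module A W]

theorem isNilpotent_or_isUnit [IsNoetherian A V] [IsArtinian A V]
    (hV : Module.Indecomposable A V) (h : Module.End A V) : IsNilpotent h ∨ IsUnit h := by
  obtain ⟨n, hn⟩ := Filter.eventually_atTop.mp h.eventually_isCompl_ker_pow_range_pow
  have hcompl : IsCompl (LinearMap.ker (h ^ (n + 1))) (LinearMap.range (h ^ (n + 1))) :=
    hn (n + 1) n.le_succ
  rcases hV.2 _ (Submodule.isIdempotentElem_projection hcompl) with hzero | hid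
  · have hker : LinearMap.ker (h ^ (n + 1)) = ⊥ := by
      rw [← Submodule.range_projection hcompl, hzero, LinearMap.range_zero]
    have hrange : LinearMap.range (h ^ (n + 1)) = ⊤ := by
      rw [← Submodule.ker_projection hcompl, hzero, LinearMap.ker_zero]
    have hunit : IsUnit (h ^ (n + 1)) := (Module.End.isUnit_iff _).mpr
      ⟨LinearMap.ker_eq_bot.mp hker, LinearMap.range_eq_top.mp hrange⟩
    exact Or.inr (isUnit_pow_succ_iff.mp hunit)
  · have hker : LinearMap.ker (h ^ (n + 1)) = ⊤ := by
      rw [← Submodule.range_projection hcompl, hid, LinearMap.range_id]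
    exact Or.inl ⟨n + 1, LinearMap.ker_eq_top.mp hker⟩

theorem bijective_of_comp_eq_id [Nontrivial W] (hV : Module.Indecomposable A V)
    {f : V →ₗ[A] W} {s : W →ₗ[A] V} (hfs : f ∘ₗ s = LinearMap.id) : Function.Bijective f := by
  have hright : Function.RightInverse s f := LinearMap.congr_fun hfs
  have hidem : (s ∘ₗ f) ∘ₗ (s ∘ₗ f) = s ∘ₗ f := by
    ext v
    exact congrArg s (hright (f v))
  rcases hV.2 _ hidem with hzero | hid
  · obtain ⟨w, hw⟩ := exists_ne (0 : W)
    have hsw : s w = 0 := calc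
      s w = (s ∘ₗ f) (s w) := (congrArg s (hright w)).symm
      _ = 0 := LinearMap.congr_fun hzero (s w)
    exact absurd (by rw [← hright w, hsw, map_zero]) hw
  · have hleft : Function.LeftInverse s f := LinearMap.congr_fun hid
    exact ⟨hleft.injective, hright.surjective⟩

theorem bijective_of_isUnit_comp [Nontrivial W] (hV : Module.Indecomposable A V)
    {f : V →ₗ[A] W} {g : W →ₗ[A] V} (hfg : IsUnit (f ∘ₗ g : Module.End A W)) :
    Function.Bijective f := by
  obtain ⟨u, hu⟩ := hfg.exists_right_inv
  exact hV.bijective_of_comp_eq_id (s := g ∘ₗ u) hu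

end Ring

section Algebra

variable {k A W : Type*} [Field k] [IsAlgClosed k] [Ring A] [Algebra k A] [AddCommGroup W]
  [Module k W] [Module A W] [IsScalarTower k A W] [FiniteDimensional k W]

theorem exists_isNilpotent_algebraMap_sub [SMulCommClass A k W]
    (hW : Module.Indecomposable A W) (h : Module.End A W) :
    ∃ c : k, IsNilpotent (algebraMap k (Module.End A W) c - h) := by
  have : Nontrivial W := hW.1
  have : IsNoetherian A W := isNoetherian_of_tower k inferInstance
  have : IsArtinian A W := isArtinian_of_tower k inferInstance
  have : FiniteDimensional k (Module.End A W) := Module.Finite.of_injective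
    (LinearMap.restrictScalarsₗ k A W W k) (LinearMap.restrictScalars_injective k)
  obtain ⟨c, hc⟩ := spectrum.nonempty_of_isAlgClosed_of_finiteDimensional k h
  exact ⟨c, (hW.isNilpotent_or_isUnit _).resolve_right hc⟩

theorem exists_trace_eq_mul_finrank (hW : Module.Indecomposable A W) (h : Module.End A W) :
    ∃ c : k, LinearMap.trace k W (LinearMap.restrictScalars k h) = c * Module.finrank k W := by
  have : SMulCommClass A k W := IsScalarTower.to_smulCommClass'
  obtain ⟨c, hc⟩ := hW.exists_isNilpotent_algebraMap_sub (k := k) h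
  have htrace : LinearMap.trace k W (c • LinearMap.id - LinearMap.restrictScalars k h) = 0 :=
    trace_restrictScalars_eq_zero_of_isNilpotent hc
  rw [map_sub, map_smul, LinearMap.trace_id, smul_eq_mul, sub_eq_zero] at htrace
  exact ⟨c, htrace.symm⟩

end Algebra

end Module.Indecomposable

theorem negligible_iff_not_bijective_or_finrank_eq_zero_general
    {k A V W : Type*} [Field k] [IsAlgClosed k] [Ring A] [Algebra k A]
    [AddCommGroup V] [AddCommGroup W] [Module k V] [Module k W]
    [Module A V] [Module A W] [IsScalarTower k A V] [IsScalarTower k A W]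
    [FiniteDimensional k W]
    (hV : Module.Indecomposable A V) (hW : Module.Indecomposable A W)
    (f : V →ₗ[A] W) :
    (∀ g : W →ₗ[A] V, LinearMap.trace k W (LinearMap.restrictScalars k (f ∘ₗ g)) = 0) ↔
      (¬ Function.Bijective f ∨ (Module.finrank k V : k) = 0) := by
  have : Nontrivial W := hW.1
  by_cases hf : Function.Bijective f
  · let e : V ≃ₗ[A] W := LinearEquiv.ofBijective f hf
    have hdim : Module.finrank k V = Module.finrank k W := (e.restrictScalars k).finrank_eq
    have hcomp : f ∘ₗ (e.symm : W →ₗ[A] V) = LinearMap.id := LinearMap.ext e.apply_symm_apply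
    simp only [hf, not_true_eq_false, false_or, hdim]
    constructor
    · intro htrace
      rw [← LinearMap.trace_id, ← LinearMap.restrictScalars_id k (S := A), ← hcomp]
      exact htrace e.symm
    · intro hzero g
      obtain ⟨c, hc⟩ := hW.exists_trace_eq_mul_finrank (k := k) (f ∘ₗ g)
      rw [hc, hzero, mul_zero]
  · have : IsNoetherian A W := isNoetherian_of_tower k inferInstance
    have : IsArtinian A W := isArtinian_of_tower k inferInstance
    refine iff_of_true (fun g => ?_) (Or.inl hf)
    have hfg : ¬ IsUnit (f ∘ₗ g : Module.End A W) := mt hV.bijective_of_isUnit_comp hf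
    exact trace_restrictScalars_eq_zero_of_isNilpotent
      ((hW.isNilpotent_or_isUnit _).resolve_right hfg)

/-- Characterization of negligible morphisms between indecomposable modules:
`f : V → W` satisfies `Tr(f ∘ g) = 0` for all `g : W → V` iff `f` is not an
isomorphism or `dim V = 0` in `k`. -/
theorem negligible_iff_not_bijective_or_finrank_eq_zero
    {k A V W : Type*} [Field k] [IsAlgClosed k] [Ring A] [Algebra k A]
    [AddCommGroup V] [AddCommGroup W] [Module k V] [Module k W]
    [Module A V] [Module A W] [IsScalarTower k A V] [IsScalarTower k A W]
    [FiniteDimensional k V] [FiniteDimensional k W]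
    (hV : Module.Indecomposable A V) (hW : Module.Indecomposable A W)
    (f : V →ₗ[A] W) :
    (∀ g : W →ₗ[A] V, LinearMap.trace k W (LinearMap.restrictScalars k (f ∘ₗ g)) = 0) ↔
      (¬ Function.Bijective f ∨ (Module.finrank k V : k) = 0) :=
  negligible_iff_not_bijective_or_finrank_eq_zero_general hV hW f
end

section
/- Let k be a field, G a finite group, and H a subgroup of G such that the index [G : H] is nonzero in k (i.e., the image of the natural number [G : H] in k is a unit). Let V and W be finite-dimensional k-linear representations of G, and let f : V → W be a G-equivariant linear map such that for every G-equivariant linear map g : W → V one has trace(f ∘ g) = 0. Then for every H-equivariant linear map g : W → V one also has trace(f ∘ g) = 0. -/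
/-! Let `g : W → V` be `H`-equivariant, that is, an `H`-invariant vector of the conjugation
representation of `G` on `Hom(W, V)`. The sum `T` of the conjugates of `g` over the cosets of `H`
is `G`-equivariant, so `tr (f ∘ T) = 0`. Since `f` is `G`-equivariant, `f ∘ (s • g)` is the
conjugate of `f ∘ g` by `s`, so every coset contributes the same trace and
`tr (f ∘ T) = [G : H] * tr (f ∘ g)`. -/

section RelTrace

variable {k G M : Type*} [Semiring k] [Group G] [AddCommMonoid M] [Module k M]
  (ρ : Representation k G M) (H : Subgroup G)

/-- The relative trace `v ↦ ∑ s ∈ G ⧸ H, s • v`, which carries `H`-invariant vectors of a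
representation to `G`-invariant ones. It is defined on all of `M` through a choice of coset
representatives; only on `H`-invariant vectors is it independent of that choice. -/
noncomputable def relTrace [Fintype (G ⧸ H)] : M →ₗ[k] M :=
  ∑ q : G ⧸ H, ρ q.out

theorem relTrace_apply [Fintype (G ⧸ H)] (v : M) : relTrace ρ H v = ∑ q : G ⧸ H, ρ q.out v :=
  LinearMap.sum_apply _ _ _

variable {H} {v : M}

theorem rho_apply_eq_of_mk_eq (hv : ∀ s ∈ H, ρ s v = v) {s t : G}
    (hst : (s : G ⧸ H) = (t : G ⧸ H)) : ρ s v = ρ t v := by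
  calc ρ s v = ρ s (ρ (s⁻¹ * t) v) := by rw [hv _ (QuotientGroup.eq.mp hst)]
    _ = ρ t v := by rw [← Module.End.mul_apply, ← map_mul, mul_inv_cancel_left]

theorem rho_apply_relTrace [Fintype (G ⧸ H)] (hv : ∀ s ∈ H, ρ s v = v) (s : G) :
    ρ s (relTrace ρ H v) = relTrace ρ H v := by
  simp only [relTrace_apply, map_sum]
  refine Fintype.sum_equiv (MulAction.toPerm s) _ _ fun q => ?_
  have hcoset : ((s * q.out : G) : G ⧸ H) = ((s • q).out : G) := by
    rw [QuotientGroup.out_eq', ← smul_eq_mul, MulAction.Quotient.mk_smul_out]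
  rw [← Module.End.mul_apply, ← map_mul, MulAction.toPerm_apply]
  exact rho_apply_eq_of_mk_eq ρ hv hcoset

end RelTrace

section LinHom

variable {k G V W : Type*} [CommSemiring k] [Group G]
  [AddCommMonoid V] [Module k V] [AddCommMonoid W] [Module k W]
  {ρV : Representation k G V} {ρW : Representation k G W}

theorem linHom_apply_eq_self_iff {s : G} {g : W →ₗ[k] V} :
    ρW.linHom ρV s g = g ↔ g ∘ₗ ρW s = ρV s ∘ₗ g := by
  rw [Representation.linHom_apply]
  constructor <;> intro h
  · nth_rw 1 [← h]
    ext x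
    simp
  · rw [← LinearMap.comp_assoc, ← h]
    ext x
    simp

theorem trace_comp_linHom_apply {f : V →ₗ[k] W} {s : G} (hf : f ∘ₗ ρV s = ρW s ∘ₗ f)
    (g : W →ₗ[k] V) :
    LinearMap.trace k W (f ∘ₗ ρW.linHom ρV s g) = LinearMap.trace k W (f ∘ₗ g) := by
  have hconj : f ∘ₗ ρW.linHom ρV s g = ρW s * ((f ∘ₗ g) * ρW s⁻¹) := by
    rw [Representation.linHom_apply, ← LinearMap.comp_assoc, hf]
    rfl
  rw [hconj, LinearMap.trace_mul_comm, mul_assoc, ← map_mul, inv_mul_cancel, map_one, mul_one]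

theorem trace_comp_relTrace (H : Subgroup G) [Fintype (G ⧸ H)] {f : V →ₗ[k] W}
    (hf : ∀ s : G, f ∘ₗ ρV s = ρW s ∘ₗ f) (g : W →ₗ[k] V) :
    LinearMap.trace k W (f ∘ₗ relTrace (ρW.linHom ρV) H g) =
      H.index * LinearMap.trace k W (f ∘ₗ g) := by
  calc LinearMap.trace k W (f ∘ₗ relTrace (ρW.linHom ρV) H g)
      = ∑ q : G ⧸ H, LinearMap.trace k W (f ∘ₗ ρW.linHom ρV q.out g) := by
        simp only [relTrace_apply, ← LinearMap.compRight_apply k f, map_sum]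
    _ = ∑ _q : G ⧸ H, LinearMap.trace k W (f ∘ₗ g) :=
        Finset.sum_congr rfl fun q _ => trace_comp_linHom_apply (hf q.out) g
    _ = H.index * LinearMap.trace k W (f ∘ₗ g) := by
        rw [Finset.sum_const, Finset.card_univ, nsmul_eq_mul, H.index_eq_card,
          Nat.card_eq_fintype_card]

end LinHom

theorem negligible_restrict_of_index_isUnit_general
    {k G V W : Type*} [CommSemiring k] [Group G]
    [AddCommMonoid V] [Module k V] [AddCommMonoid W] [Module k W]
    [Module.Free k W] [Module.Finite k W]
    (H : Subgroup G) (hH : (H.index : k) ∈ nonZeroDivisors k)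
    (ρV : Representation k G V) (ρW : Representation k G W)
    (f : V →ₗ[k] W) (hf : ∀ s : G, f ∘ₗ ρV s = ρW s ∘ₗ f)
    (hneg : ∀ g : W →ₗ[k] V, (∀ s : G, g ∘ₗ ρW s = ρV s ∘ₗ g) →
      LinearMap.trace k W (f ∘ₗ g) = 0) :
    ∀ g : W →ₗ[k] V, (∀ s : G, s ∈ H → g ∘ₗ ρW s = ρV s ∘ₗ g) →
      LinearMap.trace k W (f ∘ₗ g) = 0 := by
  intro g hg
  nontriviality k
  have hindex : H.index ≠ 0 := fun h => nonZeroDivisors.ne_zero hH (by rw [h, Nat.cast_zero])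
  have : Finite (G ⧸ H) := Subgroup.index_ne_zero_iff_finite.mp hindex
  have : Fintype (G ⧸ H) := Fintype.ofFinite _
  have hfixed : ∀ s ∈ H, ρW.linHom ρV s g = g := fun s hs => linHom_apply_eq_self_iff.mpr (hg s hs)
  have htrace := hneg (relTrace (ρW.linHom ρV) H g) fun s =>
    linHom_apply_eq_self_iff.mp (rho_apply_relTrace _ hfixed s)
  rw [trace_comp_relTrace H hf] at htrace
  exact (mul_left_mem_nonZeroDivisors_eq_zero_iff hH).mp htrace

/-- If `f` is a negligible morphism of `G`-representations and `H ≤ G` has index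
invertible in `k`, then `f` is negligible as a morphism of `H`-representations. -/
theorem negligible_restrict_of_index_isUnit
    {k G V W : Type*} [Field k] [Group G] [Finite G]
    [AddCommGroup V] [Module k V] [AddCommGroup W] [Module k W]
    [FiniteDimensional k V] [FiniteDimensional k W]
    (H : Subgroup G) (hH : IsUnit (H.index : k))
    (ρV : Representation k G V) (ρW : Representation k G W)
    (f : V →ₗ[k] W) (hf : ∀ s : G, f ∘ₗ ρV s = ρW s ∘ₗ f)
    (hneg : ∀ g : W →ₗ[k] V, (∀ s : G, g ∘ₗ ρW s = ρV s ∘ₗ g) →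
      LinearMap.trace k W (f ∘ₗ g) = 0) :
    ∀ g : W →ₗ[k] V, (∀ s : G, s ∈ H → g ∘ₗ ρW s = ρV s ∘ₗ g) →
      LinearMap.trace k W (f ∘ₗ g) = 0 := by
  exact negligible_restrict_of_index_isUnit_general H hH.mem_nonZeroDivisors ρV ρW f hf hneg
end

section
/- Let k be a field, G a group, and let V, W, Z, T be finite-dimensional k-linear representations of G. Let f : V → W be a G-equivariant linear map such that for every G-equivariant linear map g : W → V one has trace(f ∘ g) = 0, and let a : Z → T be any G-equivariant linear map. Then for every G-equivariant linear map h : T ⊗ W → Z ⊗ V (with respect to the tensor product representations) one has trace((a ⊗ f) ∘ h) = 0, where a ⊗ f : Z ⊗ V → T ⊗ W is the tensor product of the linear maps a and f. -/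
open TensorProduct

/-! The trace of an endomorphism of `T ⊗ W` can be taken in two stages: first over `T`, by the
partial trace, which lands in the endomorphisms of `W`, and then over `W`. Since the partial trace
commutes with composition by maps on the second factor, `tr ((a ⊗ f) ∘ h) = tr (f ∘ g)`, where
`g : W → V` is the partial trace of `(a ⊗ id) ∘ h : T ⊗ W → T ⊗ V`. The partial trace is also cyclic
in the first factor, so `g` is equivariant because `(a ⊗ id) ∘ h` is, and the negligibility of `f`
applies to it. -/

section HomTensor

variable {R T V W : Type*} [CommSemiring R] [AddCommMonoid T] [Module R T]
  [AddCommMonoid V] [Module R V] [AddCommMonoid W] [Module R W]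

theorem rTensor_comp_mk_flip (u : T →ₗ[R] W) (v : V) :
    u.rTensor V ∘ₗ (TensorProduct.mk R T V).flip v = (TensorProduct.mk R W V).flip v ∘ₗ u :=
  rfl

variable [Module.Projective R T] [Module.Finite R T]

theorem rTensorHomEquivHomRTensor_tmul (u : T →ₗ[R] W) (v : V) :
    rTensorHomEquivHomRTensor R T W V (u ⊗ₜ v) = (TensorProduct.mk R W V).flip v ∘ₗ u := by
  rw [rTensorHomEquivHomRTensor_apply]
  rfl

theorem hom_tensor_induction {p : (T →ₗ[R] W ⊗[R] V) → Prop}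
    (mk_flip_comp : ∀ (u : T →ₗ[R] W) (v : V), p ((TensorProduct.mk R W V).flip v ∘ₗ u))
    (add : ∀ φ ψ, p φ → p ψ → p (φ + ψ)) (φ : T →ₗ[R] W ⊗[R] V) : p φ := by
  obtain ⟨x, rfl⟩ := (rTensorHomEquivHomRTensor R T W V).surjective φ
  induction x with
  | zero => simpa only [LinearMap.comp_zero, map_zero] using mk_flip_comp 0 0
  | tmul u v => exact rTensorHomEquivHomRTensor_tmul u v ▸ mk_flip_comp u v
  | add x y hx hy => simpa only [map_add] using add _ _ hx hy

end HomTensor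

section PartialTrace

variable {R T V W X : Type*} [CommRing R] [AddCommGroup T] [Module R T]
  [AddCommGroup V] [Module R V] [AddCommGroup W] [Module R W] [AddCommGroup X] [Module R X]
  [Module.Free R T] [Module.Finite R T]

/-- The trace with coefficients in `V` of a map `T → T ⊗ V`: the contraction of the two copies of
`T`, computed through the isomorphism `Hom(T, T) ⊗ V ≃ Hom(T, T ⊗ V)`. -/
noncomputable def coeffTrace : (T →ₗ[R] T ⊗[R] V) →ₗ[R] V :=
  TensorProduct.lid R V ∘ₗ (LinearMap.trace R T).rTensor V ∘ₗ
    (rTensorHomEquivHomRTensor R T T V).symm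

theorem coeffTrace_mk_flip_comp (u : T →ₗ[R] T) (v : V) :
    coeffTrace ((TensorProduct.mk R T V).flip v ∘ₗ u) = LinearMap.trace R T u • v := by
  rw [← rTensorHomEquivHomRTensor_tmul]
  simp only [coeffTrace, LinearMap.comp_apply, LinearEquiv.coe_coe, LinearEquiv.symm_apply_apply,
    LinearMap.rTensor_tmul, TensorProduct.lid_tmul]

theorem coeffTrace_lTensor_comp (f : V →ₗ[R] X) (φ : T →ₗ[R] T ⊗[R] V) :
    coeffTrace (f.lTensor T ∘ₗ φ) = f (coeffTrace φ) := by
  induction φ using hom_tensor_induction with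
  | mk_flip_comp u v =>
    have push_forward : f.lTensor T ∘ₗ (TensorProduct.mk R T V).flip v =
        (TensorProduct.mk R T X).flip (f v) := rfl
    rw [← LinearMap.comp_assoc, push_forward, coeffTrace_mk_flip_comp, coeffTrace_mk_flip_comp,
      map_smul]
  | add φ ψ hφ hψ => simp only [LinearMap.comp_add, map_add, hφ, hψ]

theorem coeffTrace_comp_comm (u : T →ₗ[R] T) (φ : T →ₗ[R] T ⊗[R] V) :
    coeffTrace (φ ∘ₗ u) = coeffTrace (u.rTensor V ∘ₗ φ) := by
  induction φ using hom_tensor_induction with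
  | mk_flip_comp w v =>
    rw [LinearMap.comp_assoc, ← LinearMap.comp_assoc w, rTensor_comp_mk_flip,
      LinearMap.comp_assoc, coeffTrace_mk_flip_comp, coeffTrace_mk_flip_comp,
      LinearMap.trace_comp_comm']
  | add φ ψ hφ hψ => simp only [LinearMap.comp_add, LinearMap.add_comp, map_add, hφ, hψ]

/-- The partial trace over the first tensor factor: `partialTrace φ` sends `w` to the trace, with
coefficients in `V`, of `t ↦ φ (t ⊗ w)`. -/
noncomputable def partialTrace : (T ⊗[R] W →ₗ[R] T ⊗[R] V) →ₗ[R] W →ₗ[R] V :=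
  LinearMap.compRight R coeffTrace ∘ₗ LinearMap.lcomp R _ (TensorProduct.mk R T W).flip ∘ₗ
    LinearMap.llcomp R T (T ⊗[R] W) (T ⊗[R] V)

theorem partialTrace_apply (φ : T ⊗[R] W →ₗ[R] T ⊗[R] V) (w : W) :
    partialTrace φ w = coeffTrace (φ ∘ₗ (TensorProduct.mk R T W).flip w) :=
  rfl

theorem partialTrace_map (u : T →ₗ[R] T) (g : W →ₗ[R] V) :
    partialTrace (TensorProduct.map u g) = LinearMap.trace R T u • g := by
  ext w
  have slice : TensorProduct.map u g ∘ₗ (TensorProduct.mk R T W).flip w =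
      (TensorProduct.mk R T V).flip (g w) ∘ₗ u := rfl
  rw [partialTrace_apply, slice, coeffTrace_mk_flip_comp, LinearMap.smul_apply]

theorem partialTrace_lTensor_comp (f : V →ₗ[R] X) (φ : T ⊗[R] W →ₗ[R] T ⊗[R] V) :
    partialTrace (f.lTensor T ∘ₗ φ) = f ∘ₗ partialTrace φ := by
  ext w
  rw [LinearMap.comp_apply, partialTrace_apply, partialTrace_apply, LinearMap.comp_assoc,
    coeffTrace_lTensor_comp]

theorem partialTrace_comp_lTensor (φ : T ⊗[R] W →ₗ[R] T ⊗[R] V) (g : X →ₗ[R] W) :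
    partialTrace (φ ∘ₗ g.lTensor T) = partialTrace φ ∘ₗ g :=
  rfl

theorem partialTrace_comp_rTensor (φ : T ⊗[R] W →ₗ[R] T ⊗[R] V) (u : T →ₗ[R] T) :
    partialTrace (φ ∘ₗ u.rTensor W) = partialTrace (u.rTensor V ∘ₗ φ) := by
  ext w
  rw [partialTrace_apply, partialTrace_apply, LinearMap.comp_assoc, LinearMap.comp_assoc,
    rTensor_comp_mk_flip, ← LinearMap.comp_assoc, coeffTrace_comp_comm]

theorem trace_partialTrace [Module.Free R W] [Module.Finite R W]
    (φ : T ⊗[R] W →ₗ[R] T ⊗[R] W) :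
    LinearMap.trace R W (partialTrace φ) = LinearMap.trace R (T ⊗[R] W) φ := by
  obtain ⟨x, rfl⟩ := (homTensorHomEquiv R T W T W).surjective φ
  induction x with
  | zero => simp only [map_zero]
  | tmul u g =>
    rw [homTensorHomEquiv_apply, homTensorHomMap_apply, partialTrace_map, map_smul, smul_eq_mul,
      LinearMap.trace_tensorProduct']
  | add x y hx hy => simp only [map_add, hx, hy]

theorem trace_lTensor_comp [Module.Free R W] [Module.Finite R W] (f : V →ₗ[R] W)
    (φ : T ⊗[R] W →ₗ[R] T ⊗[R] V) :
    LinearMap.trace R (T ⊗[R] W) (f.lTensor T ∘ₗ φ) =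
      LinearMap.trace R W (f ∘ₗ partialTrace φ) := by
  rw [← trace_partialTrace, partialTrace_lTensor_comp]

theorem partialTrace_comp_eq_of_comp_map_eq {u : Module.End R T} (hu : IsUnit u)
    {v : V →ₗ[R] V} {w : W →ₗ[R] W} {φ : T ⊗[R] W →ₗ[R] T ⊗[R] V}
    (hφ : φ ∘ₗ TensorProduct.map u w = TensorProduct.map u v ∘ₗ φ) :
    partialTrace φ ∘ₗ w = v ∘ₗ partialTrace φ := by
  obtain ⟨u', right_inv, left_inv⟩ := isUnit_iff_exists.mp hu
  have w_eq : w.lTensor T = TensorProduct.map u w ∘ₗ u'.rTensor W := by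
    rw [LinearMap.map_comp_rTensor, ← Module.End.mul_eq_comp, right_inv]
    rfl
  have v_eq : v.lTensor T = u'.rTensor V ∘ₗ TensorProduct.map u v := by
    rw [LinearMap.rTensor_comp_map, ← Module.End.mul_eq_comp, left_inv]
    rfl
  calc partialTrace φ ∘ₗ w
      = partialTrace ((φ ∘ₗ TensorProduct.map u w) ∘ₗ u'.rTensor W) := by
        rw [← partialTrace_comp_lTensor, w_eq, LinearMap.comp_assoc]
    _ = partialTrace (u'.rTensor V ∘ₗ TensorProduct.map u v ∘ₗ φ) := by
        rw [partialTrace_comp_rTensor, hφ]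
    _ = v ∘ₗ partialTrace φ := by
        rw [← LinearMap.comp_assoc, ← v_eq, partialTrace_lTensor_comp]

end PartialTrace

theorem negligible_tensor_general
    {k G V W Z T : Type*} [CommRing k] [Group G]
    [AddCommGroup V] [Module k V] [AddCommGroup W] [Module k W]
    [AddCommGroup Z] [Module k Z] [AddCommGroup T] [Module k T]
    [Module.Free k W] [Module.Finite k W] [Module.Free k T] [Module.Finite k T]
    (ρV : Representation k G V) (ρW : Representation k G W)
    (ρZ : Representation k G Z) (ρT : Representation k G T) (f : V →ₗ[k] W)
    (hneg : ∀ g : W →ₗ[k] V, (∀ s : G, g ∘ₗ ρW s = ρV s ∘ₗ g) →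
      LinearMap.trace k W (f ∘ₗ g) = 0)
    (a : Z →ₗ[k] T) (ha : ∀ s : G, a ∘ₗ ρZ s = ρT s ∘ₗ a)
    (h : (T ⊗[k] W) →ₗ[k] (Z ⊗[k] V))
    (hh : ∀ s : G, h ∘ₗ (ρT.tprod ρW) s = (ρZ.tprod ρV) s ∘ₗ h) :
    LinearMap.trace k (T ⊗[k] W) ((TensorProduct.map a f) ∘ₗ h) = 0 := by
  have equivariant (s : G) : (a.rTensor V ∘ₗ h) ∘ₗ TensorProduct.map (ρT s) (ρW s) =
      TensorProduct.map (ρT s) (ρV s) ∘ₗ a.rTensor V ∘ₗ h := by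
    rw [LinearMap.comp_assoc, ← Representation.tprod_apply, hh, Representation.tprod_apply,
      ← LinearMap.comp_assoc, LinearMap.rTensor_comp_map, ha, ← LinearMap.map_comp_rTensor,
      LinearMap.comp_assoc]
  rw [← LinearMap.lTensor_comp_rTensor, LinearMap.comp_assoc, trace_lTensor_comp]
  exact hneg _ fun s ↦
    partialTrace_comp_eq_of_comp_map_eq ((Group.isUnit s).map ρT) (equivariant s)

/-- Negligible morphisms form a tensor ideal: if `f : V → W` is negligible and
`a : Z → T` is any morphism of representations, then `a ⊗ f` is negligible. -/
theorem negligible_tensor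
    {k G V W Z T : Type*} [Field k] [Group G]
    [AddCommGroup V] [Module k V] [AddCommGroup W] [Module k W]
    [AddCommGroup Z] [Module k Z] [AddCommGroup T] [Module k T]
    [FiniteDimensional k V] [FiniteDimensional k W]
    [FiniteDimensional k Z] [FiniteDimensional k T]
    (ρV : Representation k G V) (ρW : Representation k G W)
    (ρZ : Representation k G Z) (ρT : Representation k G T)
    (f : V →ₗ[k] W) (hf : ∀ s : G, f ∘ₗ ρV s = ρW s ∘ₗ f)
    (hneg : ∀ g : W →ₗ[k] V, (∀ s : G, g ∘ₗ ρW s = ρV s ∘ₗ g) →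
      LinearMap.trace k W (f ∘ₗ g) = 0)
    (a : Z →ₗ[k] T) (ha : ∀ s : G, a ∘ₗ ρZ s = ρT s ∘ₗ a) :
    ∀ h : (T ⊗[k] W) →ₗ[k] (Z ⊗[k] V),
      (∀ s : G, h ∘ₗ (ρT.tprod ρW) s = (ρZ.tprod ρV) s ∘ₗ h) →
      LinearMap.trace k (T ⊗[k] W) ((TensorProduct.map a f) ∘ₗ h) = 0 :=
  negligible_tensor_general ρV ρW ρZ ρT f hneg a ha
end

section
/- Let k be an algebraically closed field and V a finite-dimensional k-vector space. Let g be an invertible linear endomorphism of V, let E be a linear endomorphism of V, and let q ∈ k be such that qⁿ ≠ 1 for every positive integer n (q is not a root of unity). Suppose that g ∘ E = q · (E ∘ g). Then E is nilpotent. -/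
/-!
Let `p` be the minimal polynomial of `E` and `n` its degree. Scaling the roots of `p` by `q` gives a
monic polynomial `r` of degree `n` that annihilates `q • E`. Since `g * r(E) = r(q • E) * g` and
`g` can be cancelled, `r` also annihilates `E`, so `r = p` by minimality. Comparing coefficients,
`pᵢ * q ^ (n - i) = pᵢ`, hence `pᵢ = 0` for `i < n`. Thus `p = X ^ n` and `E ^ n = 0`.
-/

open Polynomial

theorem semiconjBy_aeval {R A : Type*} [CommSemiring R] [Semiring A] [Algebra R A] {u a b : A}
    (h : SemiconjBy u a b) (p : R[X]) : SemiconjBy u (aeval a p) (aeval b p) := by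
  induction p using Polynomial.induction_on' with
  | add p₁ p₂ h₁ h₂ =>
    rw [map_add, map_add]
    exact h₁.add_right h₂
  | monomial n r =>
    rw [aeval_monomial, aeval_monomial]
    exact SemiconjBy.mul_right (Algebra.commute_algebraMap_right r u) (h.pow_right n)

theorem eq_monomial_of_scaleRoots_eq_self {R : Type*} [Semiring R] [IsLeftCancelMulZero R]
    {q : R} (hq : ∀ n : ℕ, 0 < n → q ^ n ≠ 1) {p : R[X]} (hp : p.scaleRoots q = p) :
    p = monomial p.natDegree p.leadingCoeff := by
  ext i
  rw [coeff_monomial]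
  split_ifs with hi
  · rw [← hi, leadingCoeff]
  · rcases lt_or_gt_of_ne hi with hdeg | hdeg
    · exact coeff_eq_zero_of_natDegree_lt hdeg
    · have hcoeff : p.coeff i * q ^ (p.natDegree - i) = p.coeff i := by
        rw [← coeff_scaleRoots, hp]
      by_contra hne
      exact hq _ (Nat.sub_pos_of_lt hdeg) ((mul_eq_left₀ hne).mp hcoeff)

theorem aeval_scaleRoots_eq_zero_of_semiconjBy_smul {R A : Type*} [CommSemiring R] [Semiring A]
    [Algebra R A] {g a : A} (hg : IsLeftRegular g) {q : R} (h : SemiconjBy g a (q • a))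
    {p : R[X]} (hp : aeval a p = 0) : aeval a (p.scaleRoots q) = 0 := by
  have hscaled : aeval (q • a) (p.scaleRoots q) = 0 := by
    rw [Algebra.smul_def]
    exact scaleRoots_aeval_eq_zero hp
  refine hg.mul_left_eq_zero_iff.mp ?_
  rw [(semiconjBy_aeval h _).eq, hscaled, zero_mul]

theorem scaleRoots_minpoly_of_semiconjBy_smul {k A : Type*} [Field k] [Ring A] [Algebra k A]
    {g a : A} (hg : IsLeftRegular g) (ha : IsIntegral k a) {q : k}
    (h : SemiconjBy g a (q • a)) : (minpoly k a).scaleRoots q = minpoly k a :=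
  minpoly.unique_of_degree_le_degree_minpoly k a
    ((monic_scaleRoots_iff q).mpr (minpoly.monic ha))
    (aeval_scaleRoots_eq_zero_of_semiconjBy_smul hg h (minpoly.aeval k a))
    (degree_scaleRoots _).le

theorem isNilpotent_of_conj_smul_general {k A : Type*} [Field k] [Ring A] [Algebra k A]
    {g E : A} (hg : IsLeftRegular g) (hE : IsIntegral k E) {q : k}
    (hq : ∀ n : ℕ, 0 < n → q ^ n ≠ 1) (hcomm : g * E = q • (E * g)) : IsNilpotent E := by
  have hsemiconj : SemiconjBy g E (q • E) := by
    rw [SemiconjBy, hcomm, smul_mul_assoc]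
  have hminpoly : minpoly k E = X ^ (minpoly k E).natDegree := by
    conv_lhs => rw [eq_monomial_of_scaleRoots_eq_self hq
      (scaleRoots_minpoly_of_semiconjBy_smul hg hE hsemiconj)]
    rw [(minpoly.monic hE).leadingCoeff, monomial_one_right_eq_X_pow]
  refine ⟨(minpoly k E).natDegree, ?_⟩
  calc E ^ (minpoly k E).natDegree
      = aeval E (X ^ (minpoly k E).natDegree : k[X]) := (aeval_X_pow E).symm
    _ = 0 := by rw [← hminpoly, minpoly.aeval]

/-- If `g` is invertible, `q` is not a root of unity and `g ∘ E = q • (E ∘ g)`,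
then `E` is nilpotent. -/
theorem isNilpotent_of_conj_smul
    {k V : Type*} [Field k] [IsAlgClosed k]
    [AddCommGroup V] [Module k V] [FiniteDimensional k V]
    (g E : Module.End k V) (hg : Function.Bijective g) (q : k)
    (hq : ∀ n : ℕ, 0 < n → q ^ n ≠ 1)
    (hcomm : g * E = q • (E * g)) :
    IsNilpotent E :=
  isNilpotent_of_conj_smul_general (fun _ _ ↦ (LinearMap.cancel_left hg.injective).mp)
    (Algebra.IsIntegral.isIntegral E) hq hcomm
end

section
/- Let k be a field, q ∈ k a nonzero element with q² ≠ 1, and define for each positive integer n the quantum integer [n]_q = (qⁿ − q^{−n})/(q − q^{−1}) ∈ k. Then for every integer l ≥ 2, the identity [3]_q · [2l+1]_q = [2l−1]_q holds if and only if q^{4(l+1)} = 1. -/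
/-- The quantum integer `[n]_q = (q^n - q^{-n})/(q - q^{-1})`. -/
noncomputable def qInt {k : Type*} [Field k] (q : k) (n : ℕ) : k :=
  (q ^ (n : ℤ) - q ^ (-(n : ℤ))) / (q - q⁻¹)

/-!
By the Clebsch–Gordan rule `[3][n+2] = [n+4] + [n+2] + [n]`, the equation `[3][n+2] = [n]` says that
`[n+4] + [n+2] = [2][n+3]` vanishes, and `[m]` vanishes exactly when `q^{2m} = 1`. For `n = 2l - 1`
the condition `[2] = 0`, that is `q⁴ = 1`, is absorbed by `[2l+2] = 0`, that is `q^{4(l+1)} = 1`.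
-/

section QuantumInteger

variable {k : Type*} [Field k] {q : k}

theorem sub_inv_ne_zero_of_sq_ne_one (hq0 : q ≠ 0) (hq2 : q ^ 2 ≠ 1) : q - q⁻¹ ≠ 0 := by
  rwa [sub_ne_zero, Ne, ← mul_eq_one_iff_eq_inv₀ hq0, ← sq]

theorem qInt_zero (q : k) : qInt q 0 = 0 := by
  simp [qInt]

theorem qInt_one (hq0 : q ≠ 0) (hq2 : q ^ 2 ≠ 1) : qInt q 1 = 1 := by
  simpa [qInt] using div_self (sub_inv_ne_zero_of_sq_ne_one hq0 hq2)

theorem qInt_eq_zero_iff (hq0 : q ≠ 0) (hq2 : q ^ 2 ≠ 1) (n : ℕ) :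
    qInt q n = 0 ↔ q ^ (2 * n) = 1 := by
  rw [qInt, div_eq_zero_iff, or_iff_left (sub_inv_ne_zero_of_sq_ne_one hq0 hq2), sub_eq_zero,
    zpow_neg, zpow_natCast, ← mul_eq_one_iff_eq_inv₀ (pow_ne_zero n hq0), ← pow_add, ← two_mul]

theorem add_inv_mul_qInt_succ (hq0 : q ≠ 0) (n : ℕ) :
    (q + q⁻¹) * qInt q (n + 1) = qInt q (n + 2) + qInt q n := by
  simp only [qInt, ← mul_div_assoc, ← add_div, zpow_neg, zpow_natCast]
  congr 1
  field_simp
  ring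

theorem qInt_two (hq0 : q ≠ 0) (hq2 : q ^ 2 ≠ 1) : qInt q 2 = q + q⁻¹ := by
  simpa [qInt_zero, qInt_one hq0 hq2] using (add_inv_mul_qInt_succ hq0 0).symm

theorem qInt_two_mul_qInt_succ (hq0 : q ≠ 0) (hq2 : q ^ 2 ≠ 1) (n : ℕ) :
    qInt q 2 * qInt q (n + 1) = qInt q (n + 2) + qInt q n := by
  rw [qInt_two hq0 hq2, add_inv_mul_qInt_succ hq0]

theorem qInt_three_mul_qInt_add_two (hq0 : q ≠ 0) (hq2 : q ^ 2 ≠ 1) (n : ℕ) :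
    qInt q 3 * qInt q (n + 2) = qInt q (n + 4) + qInt q (n + 2) + qInt q n := by
  have two_mul_two : qInt q 2 * qInt q 2 = qInt q 3 + 1 := by
    rw [← qInt_one hq0 hq2, qInt_two_mul_qInt_succ hq0 hq2 1]
  calc qInt q 3 * qInt q (n + 2)
      = qInt q 2 * (qInt q 2 * qInt q (n + 2)) - qInt q (n + 2) := by
        linear_combination -qInt q (n + 2) * two_mul_two
    _ = qInt q 2 * qInt q (n + 3) + qInt q 2 * qInt q (n + 1) - qInt q (n + 2) := by
        rw [qInt_two_mul_qInt_succ hq0 hq2 (n + 1), mul_add]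
    _ = qInt q (n + 4) + qInt q (n + 2) + qInt q n := by
        rw [qInt_two_mul_qInt_succ hq0 hq2 (n + 2), qInt_two_mul_qInt_succ hq0 hq2 n]
        ring

theorem qInt_three_mul_qInt_add_two_eq_iff (hq0 : q ≠ 0) (hq2 : q ^ 2 ≠ 1) (n : ℕ) :
    qInt q 3 * qInt q (n + 2) = qInt q n ↔ q ^ 4 = 1 ∨ q ^ (2 * (n + 3)) = 1 := by
  rw [qInt_three_mul_qInt_add_two hq0 hq2, add_eq_right,
    ← qInt_two_mul_qInt_succ hq0 hq2 (n + 2), mul_eq_zero, qInt_eq_zero_iff hq0 hq2,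
    qInt_eq_zero_iff hq0 hq2]

end QuantumInteger

/-- For `q ≠ 0` with `q² ≠ 1` and `l ≥ 2`, one has `[3]_q [2l+1]_q = [2l-1]_q`
iff `q^{4(l+1)} = 1`. -/
theorem qInt_identity_iff (k : Type*) [Field k] (q : k) (hq0 : q ≠ 0)
    (hq2 : q ^ 2 ≠ 1) (l : ℕ) (hl : 2 ≤ l) :
    qInt q 3 * qInt q (2 * l + 1) = qInt q (2 * l - 1) ↔ q ^ (4 * (l + 1)) = 1 := by
  have index_eq : 2 * l + 1 = 2 * l - 1 + 2 := by lia
  have exponent_eq : 2 * (2 * l - 1 + 3) = 4 * (l + 1) := by lia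
  have pow_eq_one (h : q ^ 4 = 1) : q ^ (4 * (l + 1)) = 1 := by rw [pow_mul, h, one_pow]
  rw [index_eq, qInt_three_mul_qInt_add_two_eq_iff hq0 hq2, exponent_eq]
  exact or_iff_right_of_imp pow_eq_one
end
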